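/- Let d be a partial metric on a nonempty set X whose associated metric space (X,e) is complete, let φ : [0,∞) → [0,∞) be limit normal with ψ(t) := t − φ(t) semi-coercive, and let T : X → X be (M;b;φ)-contractive, i.e., d(Tx,Ty) ≤ max{φ(M(x,y)), b(x,y)} for all x, y ∈ X. Set θ := inf{d(z,z) : z ∈ X, d(z,Tz) = d(z,z)}. Then the infimum θ is attained: there exists z ∈ X with d(z,Tz) = d(z,z) and d(z,z) = θ. -/

import Mathlib

/-!
Semi-coercivity and compactness turn limit normality into a uniform gap: `t - φ t` is bounded
below by a positive constant on every `[η, ∞)`. Let `D` be the infimum of `d x (T x)` over all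
of `X`. By the gap, a pair that `T` nearly preserves, `M x y ≤ d (T x) (T y) + o(1)`, must have
`M x y ≤ D + o(1)` as soon as the self-distances of `x` and `y` tend to `D`. The triangle
inequality supplies such pairs: along a minimizing sequence `u` one has `e (u n) (T (u n)) → 0`,
so `(u m, u n)` is nearly preserved and `u` is `e`-Cauchy. If `z` is its limit, `(u n, z)` is
nearly preserved too, whence `d z (T z) ≤ D = d z z`. On the other hand `D ≤ d w (T w) = d w w`
for every competitor `w`, so `z` attains `θ`, and `θ = D`.
-/

open Filter Topology

noncomputable section

/-- A partial metric on `X` (Matthews). -/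
def IsPartialMetric {X : Type*} (d : X → X → ℝ) : Prop :=
  (∀ x y, 0 ≤ d x y) ∧
  (∀ x y, d x y = d y x) ∧
  (∀ x y, max (d x x) (d y y) ≤ d x y) ∧
  (∀ x y z, d x z ≤ d x y + d y z - d y y) ∧
  (∀ x y, d x y = d x x → d x y = d y y → x = y)

/-- The (standard) metric associated to a partial metric. -/
def assocE {X : Type*} (d : X → X → ℝ) (x y : X) : ℝ :=
  2 * d x y - d x x - d y y

/-- Completeness of the associated metric space `(X, e)`:
every `e`-Cauchy sequence `e`-converges to some point. -/
def eComplete {X : Type*} (d : X → X → ℝ) : Prop :=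
  ∀ u : ℕ → X,
    (∀ α : ℝ, 0 < α → ∃ p : ℕ, ∀ m n : ℕ, p ≤ m → p ≤ n → assocE d (u m) (u n) < α) →
    ∃ x : X, Tendsto (fun n => assocE d (u n) x) atTop (nhds 0)

/-- `M(x,y) = max{d(x,y), d(x,Tx), d(y,Ty), (1/2)(d(x,Ty)+d(Tx,y))}`. -/
def Mfun {X : Type*} (d : X → X → ℝ) (T : X → X) (x y : X) : ℝ :=
  max (max (d x y) (max (d x (T x)) (d y (T y)))) ((d x (T y) + d (T x) y) / 2)

/-- A normal function `φ : [0,∞) → [0,∞)`. -/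
def IsNormal (φ : ℝ → ℝ) : Prop :=
  (∀ t, 0 ≤ t → 0 ≤ φ t) ∧ φ 0 = 0 ∧ ∀ t, 0 < t → φ t < t

/-- `limsup_{t→s⁺} φ(t) = inf_{ε>0} sup {φ(t) : s ≤ t < s+ε}`. -/
def rightLimsup (φ : ℝ → ℝ) (s : ℝ) : ℝ :=
  sInf {y : ℝ | ∃ ε : ℝ, 0 < ε ∧ y = sSup (φ '' Set.Ico s (s + ε))}

/-- `limsup_{t→s} φ(t) = inf_{ε>0} sup {φ(t) : t ∈ [0,∞), s-ε < t < s+ε}`. -/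
def limsupAt (φ : ℝ → ℝ) (s : ℝ) : ℝ :=
  sInf {y : ℝ | ∃ ε : ℝ, 0 < ε ∧ y = sSup (φ '' (Set.Ioo (s - ε) (s + ε) ∩ Set.Ici 0))}

/-- A right limit normal function. -/
def IsRightLimitNormal (φ : ℝ → ℝ) : Prop :=
  IsNormal φ ∧ ∀ s : ℝ, 0 < s → rightLimsup φ s < s

/-- A limit normal function. -/
def IsLimitNormal (φ : ℝ → ℝ) : Prop :=
  IsNormal φ ∧ ∀ s : ℝ, 0 < s → limsupAt φ s < s

/-- `liminf_{t→∞} ψ(t) = sup_{α ≥ 0} inf {ψ(t) : t ≥ α}`, computed in `EReal`. -/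
def liminfAtInfty (ψ : ℝ → ℝ) : EReal :=
  ⨆ α : {a : ℝ // 0 ≤ a}, ⨅ t : {t : ℝ // (α : ℝ) ≤ t}, ((ψ t : ℝ) : EReal)

/-- `ψ` is semi-coercive: `liminf_{t→∞} ψ(t) > 0`. -/
def SemiCoercive (ψ : ℝ → ℝ) : Prop := 0 < liminfAtInfty ψ

/-- A partial pseudometric: a partial metric without the separation axiom (v). Axiom (iii) is
recorded through its first half `d x x ≤ d x y`, the second half being the same by symmetry. -/
structure IsPartialPseudometric {X : Type*} (d : X → X → ℝ) : Prop where
  nonneg : ∀ x y, 0 ≤ d x y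
  symm : ∀ x y, d x y = d y x
  self_le : ∀ x y, d x x ≤ d x y
  triangle : ∀ x y z, d x z ≤ d x y + d y z - d y y

/-- The uniform gap condition extracted from limit normality and semi-coercivity: `t - φ t` is
bounded away from `0` on every half-line `[η, ∞)` with `η > 0`. -/
def IsUniformlyBelowId (φ : ℝ → ℝ) : Prop :=
  ∀ η, 0 < η → ∃ δ, 0 < δ ∧ ∀ t, η ≤ t → φ t ≤ t - δ

/-- `T` is `(M;b;φ)`-contractive with respect to `d`, where `b x y = (d x x + d y y) / 2`. -/
def IsMbContractive {X : Type*} (d : X → X → ℝ) (φ : ℝ → ℝ) (T : X → X) : Prop :=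
  ∀ x y, d (T x) (T y) ≤ max (φ (Mfun d T x y)) ((d x x + d y y) / 2)

lemma SemiCoercive.exists_pos_forall_ge_le {ψ : ℝ → ℝ} (hψ : SemiCoercive ψ) :
    ∃ α δ : ℝ, 0 < δ ∧ ∀ t, α ≤ t → δ ≤ ψ t := by
  obtain ⟨⟨α, _⟩, hα⟩ := lt_iSup_iff.1 hψ
  obtain ⟨δ, hδ, hδα⟩ := EReal.lt_iff_exists_real_btwn.1 hα
  exact ⟨α, δ, EReal.coe_pos.1 hδ,
    fun t ht => EReal.coe_le_coe_iff.1 (le_iInf_iff.1 hδα.le ⟨t, ht⟩)⟩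

lemma IsNormal.le_self {φ : ℝ → ℝ} (hφ : IsNormal φ) {t : ℝ} (ht : 0 ≤ t) : φ t ≤ t := by
  obtain rfl | ht := ht.eq_or_lt
  · exact hφ.2.1.le
  · exact (hφ.2.2 t ht).le

lemma IsLimitNormal.exists_pos_eventually_le_sub {φ : ℝ → ℝ} (hφ : IsLimitNormal φ) {s : ℝ}
    (hs : 0 < s) : ∃ δ, 0 < δ ∧ ∀ᶠ t in 𝓝 s, δ ≤ t - φ t := by
  obtain ⟨_, ⟨ε, hε, rfl⟩, hlt⟩ := exists_lt_of_csInf_lt (by exact ⟨_, 1, one_pos, rfl⟩) (hφ.2 s hs)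
  set c := sSup (φ '' (Set.Ioo (s - ε) (s + ε) ∩ Set.Ici 0))
  have hbdd : BddAbove (φ '' (Set.Ioo (s - ε) (s + ε) ∩ Set.Ici 0)) := by
    refine ⟨s + ε, ?_⟩
    rintro _ ⟨t, ⟨ht, ht0⟩, rfl⟩
    exact (hφ.1.le_self ht0).trans ht.2.le
  refine ⟨(s - c) / 2, by linarith, ?_⟩
  filter_upwards [Ioo_mem_nhds (sub_lt_self s hε) (lt_add_of_pos_right s hε), lt_mem_nhds hs,
    lt_mem_nhds (show (s + c) / 2 < s by linarith)] with t ht ht0 htc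
  have hφt : φ t ≤ c := le_csSup hbdd ⟨t, ⟨ht, ht0.le⟩, rfl⟩
  linarith

lemma exists_pos_forall_le_of_isCompact {α : Type*} [TopologicalSpace α] {K : Set α}
    (hK : IsCompact K) {f : α → ℝ}
    (hf : ∀ x ∈ K, ∃ δ, 0 < δ ∧ ∀ᶠ y in 𝓝[K] x, δ ≤ f y) :
    ∃ δ, 0 < δ ∧ ∀ x ∈ K, δ ≤ f x := by
  refine hK.induction_on (p := fun s => ∃ δ, 0 < δ ∧ ∀ x ∈ s, δ ≤ f x)
    ⟨1, one_pos, by simp⟩ ?_ ?_ fun x hx => ?_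
  · rintro s t hst ⟨δ, hδ, h⟩
    exact ⟨δ, hδ, fun x hx => h x (hst hx)⟩
  · rintro s t ⟨δ, hδ, hs⟩ ⟨δ', hδ', ht⟩
    exact ⟨min δ δ', lt_min hδ hδ', fun x hx =>
      hx.elim (fun hx => min_le_of_left_le (hs x hx)) fun hx => min_le_of_right_le (ht x hx)⟩
  · obtain ⟨δ, hδ, h⟩ := hf x hx
    exact ⟨{y | δ ≤ f y}, h, δ, hδ, fun _ hy => hy⟩

lemma IsLimitNormal.isUniformlyBelowId {φ : ℝ → ℝ} (hφ : IsLimitNormal φ)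
    (hψ : SemiCoercive fun t => t - φ t) : IsUniformlyBelowId φ := by
  intro η hη
  obtain ⟨α, δ₁, hδ₁, hfar⟩ := hψ.exists_pos_forall_ge_le
  obtain ⟨δ₂, hδ₂, hnear⟩ : ∃ δ, 0 < δ ∧ ∀ t ∈ Set.Icc η α, δ ≤ t - φ t := by
    refine exists_pos_forall_le_of_isCompact isCompact_Icc fun s hs => ?_
    obtain ⟨δ, hδ, h⟩ := hφ.exists_pos_eventually_le_sub (hη.trans_le hs.1)
    exact ⟨δ, hδ, h.filter_mono nhdsWithin_le_nhds⟩
  refine ⟨min δ₁ δ₂, lt_min hδ₁ hδ₂, fun t ht => le_sub_comm.1 ?_⟩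
  obtain hα | hα := le_total α t
  · exact min_le_of_left_le (hfar t hα)
  · exact min_le_of_right_le (hnear t ⟨ht, hα⟩)

section

variable {X ι : Type*} {d : X → X → ℝ} {φ : ℝ → ℝ} {T : X → X} {l : Filter ι} {u v : ι → X} {D : ℝ}

lemma IsPartialMetric.isPartialPseudometric (hd : IsPartialMetric d) : IsPartialPseudometric d where
  nonneg := hd.1
  symm := hd.2.1
  self_le x y := (le_max_left _ _).trans (hd.2.2.1 x y)
  triangle := hd.2.2.2.1

lemma le_Mfun (x y : X) : d x y ≤ Mfun d T x y :=
  (le_max_left _ _).trans (le_max_left _ _)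

lemma map_right_le_Mfun (x y : X) : d y (T y) ≤ Mfun d T x y :=
  ((le_max_right _ _).trans (le_max_right _ _)).trans (le_max_left _ _)

namespace IsPartialPseudometric

lemma self_le_right (hd : IsPartialPseudometric d) (x y : X) : d y y ≤ d x y :=
  hd.symm x y ▸ hd.self_le y x

lemma assocE_nonneg (hd : IsPartialPseudometric d) (x y : X) : 0 ≤ assocE d x y := by
  unfold assocE
  linarith [hd.self_le x y, hd.self_le_right x y]

lemma sub_assocE_le_self (hd : IsPartialPseudometric d) (x y : X) :
    d x y - assocE d x y ≤ d x x := by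
  unfold assocE
  linarith [hd.self_le_right x y]

lemma abs_self_sub_self_le_assocE (hd : IsPartialPseudometric d) (x y : X) :
    |d x x - d y y| ≤ assocE d x y := by
  unfold assocE
  rw [abs_le]
  constructor <;> linarith [hd.self_le x y, hd.self_le_right x y]

lemma tendsto_self_of_tendsto_assocE (hd : IsPartialPseudometric d)
    (huv : Tendsto (fun i => d (u i) (v i)) l (𝓝 D))
    (he : Tendsto (fun i => assocE d (u i) (v i)) l (𝓝 0)) :
    Tendsto (fun i => d (u i) (u i)) l (𝓝 D) :=
  tendsto_of_tendsto_of_tendsto_of_le_of_le (by simpa using huv.sub he) huv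
    (fun i => hd.sub_assocE_le_self (u i) (v i)) fun i => hd.self_le (u i) (v i)

lemma tendsto_self_of_tendsto_assocE_const (hd : IsPartialPseudometric d) {z : X}
    (he : Tendsto (fun i => assocE d (u i) z) l (𝓝 0)) :
    Tendsto (fun i => d (u i) (u i)) l (𝓝 (d z z)) :=
  tendsto_iff_norm_sub_tendsto_zero.2 <| squeeze_zero (fun _ => norm_nonneg _)
    (fun i => hd.abs_self_sub_self_le_assocE (u i) z) he

lemma Mfun_map_right (hd : IsPartialPseudometric d) (x : X) :
    Mfun d T x (T x) = max (d x (T x)) (d (T x) (T (T x))) := by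
  have htri := hd.triangle x (T x) (T (T x))
  rw [Mfun, max_left_comm, max_eq_right (le_max_left (d x (T x)) _), max_eq_left]
  linarith [le_max_left (d x (T x)) (d (T x) (T (T x))),
    le_max_right (d x (T x)) (d (T x) (T (T x)))]

lemma Mfun_le_map_map_add (hd : IsPartialPseudometric d) (x y : X) :
    Mfun d T x y ≤ d (T x) (T y) + (assocE d x (T x) + assocE d y (T y)) := by
  have hxy : d x y ≤
      d (T x) (T y) + (d x (T x) - d (T x) (T x)) + (d y (T y) - d (T y) (T y)) := by
    linarith [hd.triangle x (T x) y, hd.triangle (T x) (T y) y, hd.symm (T y) y]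
  have hM : Mfun d T x y ≤ d x y + (d x (T x) - d x x) + (d y (T y) - d y y) := by
    have hx := hd.self_le x (T x)
    have hy := hd.self_le y (T y)
    refine max_le (max_le ?_ (max_le ?_ ?_)) ?_
    · linarith
    · linarith [hd.self_le x y]
    · linarith [hd.self_le_right x y]
    · linarith [hd.triangle x y (T y), hd.triangle (T x) x y, hd.symm (T x) x]
  unfold assocE
  linarith

lemma Mfun_le_map_map_add_two_mul (hd : IsPartialPseudometric d) (x y : X) :
    Mfun d T x y ≤ d (T x) (T y) + (assocE d x (T x) + 2 * assocE d x y) := by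
  have hx := hd.self_le x (T x)
  have hxy := hd.self_le x y
  have hyx := hd.self_le_right x y
  have hyTy : d y (T y) ≤ d (T x) (T y) + (d x (T x) - d (T x) (T x)) + (d x y - d x x) := by
    linarith [hd.triangle y x (T y), hd.triangle x (T x) (T y), hd.symm y x]
  have hM : Mfun d T x y ≤ d y (T y) + (d x (T x) - d x x) + (d x y - d y y) := by
    have hy := hd.self_le y (T y)
    refine max_le (max_le ?_ (max_le ?_ ?_)) ?_
    · linarith
    · linarith
    · linarith
    · linarith [hd.triangle x y (T y), hd.triangle (T x) x y, hd.symm (T x) x]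
  unfold assocE
  linarith

end IsPartialPseudometric

namespace IsMbContractive

lemma eventually_Mfun_lt (hT : IsMbContractive d φ T) (hφ : IsUniformlyBelowId φ)
    (hu : Tendsto (fun i => d (u i) (u i)) l (𝓝 D)) (hv : Tendsto (fun i => d (v i) (v i)) l (𝓝 D))
    {r : ι → ℝ} (hr : Tendsto r l (𝓝 0))
    (hM : ∀ i, Mfun d T (u i) (v i) ≤ d (T (u i)) (T (v i)) + r i)
    {c : ℝ} (hc : 0 < c) (hDc : D < c) : ∀ᶠ i in l, Mfun d T (u i) (v i) < c := by
  obtain ⟨δ, hδ, hgap⟩ := hφ c hc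
  have hb : Tendsto (fun i => (d (u i) (u i) + d (v i) (v i)) / 2 + r i) l (𝓝 D) := by
    simpa using ((hu.add hv).div_const 2).add hr
  filter_upwards [hr.eventually_lt_const hδ, hb.eventually_lt_const hDc] with i hrδ hbc
  by_contra! hcM
  have hφM := hgap _ hcM
  obtain h | h := le_max_iff.1 (hT (u i) (v i)) <;> linarith [hM i]

lemma two_mul_le_self_add_self (hT : IsMbContractive d φ T) (hd : IsPartialPseudometric d)
    (hD : ∀ x, D ≤ d x (T x)) {δ : ℝ} (hδ : 0 < δ) (hgap : ∀ t, D ≤ t → φ t ≤ t - δ) {x : X}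
    (hx : d x (T x) < D + δ) : 2 * D ≤ d x x + d (T x) (T x) := by
  have hφM := hgap (Mfun d T x (T x)) ((hD x).trans (le_Mfun x (T x)))
  have hDTx := hD (T x)
  rw [hd.Mfun_map_right] at hφM
  have hTx := hT x (T x)
  rw [hd.Mfun_map_right] at hTx
  obtain h | h := le_max_iff.1 hTx
  · obtain hmax | hmax := max_choice (d x (T x)) (d (T x) (T (T x))) <;>
      rw [hmax] at h hφM <;> linarith
  · linarith

lemma tendsto_assocE_map (hT : IsMbContractive d φ T) (hd : IsPartialPseudometric d)
    (hφ : IsUniformlyBelowId φ) (hD : ∀ x, D ≤ d x (T x))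
    (hu : Tendsto (fun i => d (u i) (T (u i))) l (𝓝 D)) :
    Tendsto (fun i => assocE d (u i) (T (u i))) l (𝓝 0) := by
  have hself : ∀ᶠ i in l, 2 * D ≤ d (u i) (u i) + d (T (u i)) (T (u i)) := by
    obtain hD0 | hD0 := le_or_gt D 0
    · exact .of_forall fun i => by
        linarith [hd.nonneg (u i) (u i), hd.nonneg (T (u i)) (T (u i))]
    · obtain ⟨δ, hδ, hgap⟩ := hφ D hD0
      filter_upwards [hu.eventually_lt_const (lt_add_of_pos_right D hδ)] with i hi
      exact hT.two_mul_le_self_add_self hd hD hδ hgap hi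
  have hlim : Tendsto (fun i => 2 * d (u i) (T (u i)) - 2 * D) l (𝓝 0) := by
    simpa using (hu.const_mul 2).sub_const (2 * D)
  refine squeeze_zero' (.of_forall fun i => hd.assocE_nonneg _ _) ?_ hlim
  filter_upwards [hself] with i hi
  unfold assocE
  linarith

lemma eventually_assocE_lt (hT : IsMbContractive d φ T) (hd : IsPartialPseudometric d)
    (hφ : IsUniformlyBelowId φ) (hD : 0 ≤ D)
    (hself : Tendsto (fun i => d (u i) (u i)) l (𝓝 D))
    (he : Tendsto (fun i => assocE d (u i) (T (u i))) l (𝓝 0)) {α : ℝ} (hα : 0 < α) :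
    ∀ᶠ p in l ×ˢ l, assocE d (u p.1) (u p.2) < α := by
  have hself₁ := hself.comp (tendsto_fst (f := l) (g := l))
  have hself₂ := hself.comp (tendsto_snd (f := l) (g := l))
  have he₂ : Tendsto (fun p : ι × ι => assocE d (u p.1) (T (u p.1)) + assocE d (u p.2) (T (u p.2)))
      (l ×ˢ l) (𝓝 0) := by
    simpa using (he.comp tendsto_fst).add (he.comp tendsto_snd)
  have hDα : D - α / 4 < D := by linarith
  filter_upwards [hT.eventually_Mfun_lt hφ hself₁ hself₂ he₂
      (fun p => hd.Mfun_le_map_map_add (u p.1) (u p.2)) (c := D + α / 4)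
      (by positivity) (by linarith),
    hself₁.eventually_const_lt hDα, hself₂.eventually_const_lt hDα] with p hM h₁ h₂
  have hdM : d (u p.1) (u p.2) ≤ Mfun d T (u p.1) (u p.2) := le_Mfun _ _
  simp only [Function.comp_apply] at hM h₁ h₂
  unfold assocE
  linarith

lemma map_le_of_tendsto_assocE (hT : IsMbContractive d φ T) (hd : IsPartialPseudometric d)
    (hφ : IsUniformlyBelowId φ) [l.NeBot] {z : X}
    (he : Tendsto (fun i => assocE d (u i) (T (u i))) l (𝓝 0))
    (hz : Tendsto (fun i => assocE d (u i) z) l (𝓝 0)) : d z (T z) ≤ d z z := by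
  refine le_of_forall_gt fun c hc => ?_
  have hr : Tendsto (fun i => assocE d (u i) (T (u i)) + 2 * assocE d (u i) z) l (𝓝 0) := by
    simpa using he.add (hz.const_mul 2)
  obtain ⟨i, hi⟩ := (hT.eventually_Mfun_lt hφ (hd.tendsto_self_of_tendsto_assocE_const hz)
    tendsto_const_nhds hr (fun i => hd.Mfun_le_map_map_add_two_mul (u i) z)
    ((hd.nonneg z z).trans_lt hc) hc).exists
  exact (map_right_le_Mfun (u i) z).trans_lt hi

end IsMbContractive

theorem dFixed_min_attained_general [Nonempty X] (hd : IsPartialPseudometric d)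
    (hcomp : eComplete d) (hφ : IsUniformlyBelowId φ) (hT : IsMbContractive d φ T) :
    ∃ z, d z (T z) = d z z ∧ ∀ x, d z z ≤ d x (T x) := by
  have hbdd : BddBelow (Set.range fun x => d x (T x)) :=
    ⟨0, Set.forall_mem_range.2 fun x => hd.nonneg x (T x)⟩
  obtain ⟨_, -, hlim, hmem⟩ := exists_seq_tendsto_sInf (Set.range_nonempty _) hbdd
  choose u hu using hmem
  obtain rfl := funext hu
  set D := sInf (Set.range fun x => d x (T x))
  have hD : ∀ x, D ≤ d x (T x) := fun x => csInf_le hbdd ⟨x, rfl⟩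
  have he := hT.tendsto_assocE_map hd hφ hD hlim
  have hself := hd.tendsto_self_of_tendsto_assocE hlim he
  have hD0 : 0 ≤ D := ge_of_tendsto' hself fun n => hd.nonneg (u n) (u n)
  obtain ⟨z, hz⟩ := hcomp u fun α hα => by
    have hcauchy := hT.eventually_assocE_lt hd hφ hD0 hself he hα
    rw [prod_atTop_atTop_eq] at hcauchy
    obtain ⟨N, hN⟩ := eventually_atTop_prod_self'.1 hcauchy
    exact ⟨N, fun m n hm hn => hN m hm n hn⟩
  have hzD : d z z = D := tendsto_nhds_unique (hd.tendsto_self_of_tendsto_assocE_const hz) hself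
  exact ⟨z, (hT.map_le_of_tendsto_assocE hd hφ he hz).antisymm (hd.self_le z (T z)),
    fun x => hzD ▸ hD x⟩

end

/-- the infimum `θ` of self-distances of `d`-fixed points is attained. -/
theorem dFixed_min_attained {X : Type*} [Nonempty X] (d : X → X → ℝ)
    (hd : IsPartialMetric d) (hcomp : eComplete d)
    (φ : ℝ → ℝ) (hφ : IsLimitNormal φ) (hψ : SemiCoercive (fun t => t - φ t))
    (T : X → X)
    (hT : ∀ x y : X, d (T x) (T y) ≤
      max (φ (Mfun d T x y)) ((d x x + d y y) / 2))
    (θ : ℝ) (hθ : θ = sInf {r : ℝ | ∃ z : X, d z (T z) = d z z ∧ r = d z z}) :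
    ∃ z : X, d z (T z) = d z z ∧ d z z = θ := by
  obtain ⟨z, hz, hmin⟩ := dFixed_min_attained_general hd.isPartialPseudometric hcomp
    (hφ.isUniformlyBelowId hψ) hT
  have hleast : IsLeast {r : ℝ | ∃ z : X, d z (T z) = d z z ∧ r = d z z} (d z z) :=
    ⟨⟨z, hz, rfl⟩, by rintro _ ⟨w, hw, rfl⟩; exact hw ▸ hmin w⟩
  exact ⟨z, hz, hθ ▸ hleast.csInf_eq.symm⟩
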